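/- Let ξ = {ξ_{ij}} be a row exchangeable array of S-valued random variables. Then there exist an a.s.-unique random probability measure ϖ on M₁(S) and an a.s.-unique sequence μ = (μ_i) of random probability measures on S such that conditionally on ϖ the sequence (μ_i) is i.i.d. with distribution ϖ (i.e. L(μ | ϖ) = ϖ^∞ a.s.), and for each i, conditionally on μ_i the row (ξ_{ij})_j is i.i.d. with distribution μ_i (i.e. L(ξ_i | μ_i) = μ_i^∞ a.s.). -/

import Mathlib

/-!
The proof rests on a de Finetti theorem for one exchangeable sequence in a standard Borel space
(`exists_directs`), applied twice.

**One sequence.** Let `ν` be an exchangeable law on `ℕ → E`, let `θ` be the shift, and let `κ` be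
a regular conditional law of `x₀` given `θ x`. Exchangeability makes `ν` invariant under every
injective reindexing of coordinates, so `ν` is `θ`-invariant and `(x₀, θ² x)` has the same law as
`(x₀, θ x)`; hence `κ (θ² x)` is the conditional law of `x₀` given `θ² x`. For `h y = κ y A` this
gives `∫ h · (h ∘ θ) = ∫ h² = ∫ (h ∘ θ)²`, so `h ∘ θ = h` almost surely, and `κ` is almost surely
shift-invariant. Conditioning on `θ x` peels off the coordinates one at a time, and
`E[W(κ) ∏_{i<n} 1_{A_i}(x_i)] = E[W(κ) ∏_{i<n} κ(A_i)]` follows by induction. This moment identity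
is the predicate `Directs`; it is equivalent to `L(X | m) = m^∞` (`Directs.exists_condExp`,
`Directs.of_condExp`).

**Existence for arrays.** All rows have the same exchangeable law, so one measurable `F` with
`μ_i = F(ξ_i)` directs every row. The sequence of rows is itself exchangeable in the standard Borel
space `ℕ → S`, hence directed by some random measure `λ` on `ℕ → S`. Pushing forward, `ϖ = F_* λ`
directs `(μ_i)`. In this way no standard Borel structure on the space of measures is needed.

**Uniqueness.** If `m` directs `X`, the variables `1_A(X_i) - m(A)` are orthogonal and bounded by
`1`, so `∑_{i<n} 1_A(X_i)` is within `√n` of `n m(A)` in `L²`. Two directing measures therefore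
agree almost surely on every measurable `A` (`Directs.ae_eq_apply`), and a countable generating
π-system upgrades this to almost sure equality of measures. For `ϖ` this last step uses that `ϖ` is
carried by probability measures, where countably many evaluations generate the σ-algebra
(`ae_eq_of_forall_measurableSet_measure`).
-/

open MeasureTheory ProbabilityTheory TopologicalSpace

noncomputable section

/-- A finite permutation of `ℕ`. -/
def FinitePerm (σ : Equiv.Perm ℕ) : Prop := {n | σ n ≠ n}.Finite

/-- The array `ξ` is row exchangeable. -/
def RowExchangeable {Ω S : Type*} [MeasurableSpace Ω] [MeasurableSpace S]
    (P : Measure Ω) (ξ : ℕ → ℕ → Ω → S) : Prop :=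
  (∀ (i : ℕ) (τ : Equiv.Perm ℕ), FinitePerm τ →
    Measure.map (fun ω (j : ℕ) => ξ i (τ j) ω) P = Measure.map (fun ω (j : ℕ) => ξ i j ω) P) ∧
  (∀ σ : Equiv.Perm ℕ, FinitePerm σ →
    Measure.map (fun ω (i j : ℕ) => ξ (σ i) j ω) P
      = Measure.map (fun ω (i j : ℕ) => ξ i j ω) P)

/-- `π` is the infinite product (i.i.d.) measure on `ℕ → X` with all factors `ν`. -/
def IsIIDProduct {X : Type*} [MeasurableSpace X] (ν : Measure X) (π : Measure (ℕ → X)) : Prop :=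
  IsProbabilityMeasure π ∧
    ∀ (n : ℕ) (A : Fin n → Set X), (∀ i, MeasurableSet (A i)) →
      π {x | ∀ i : Fin n, x (i : ℕ) ∈ A i} = ∏ i : Fin n, ν (A i)

/-- `ϖ` is a random probability measure on `M₁(S)` and `μ = (μ_i)` a sequence of random
probability measures on `S` such that `L(μ | ϖ) = ϖ^∞` a.s. and `L(ξ_i | μ_i) = μ_i^∞` a.s.
for all `i`. -/
def DeFinettiDirects {Ω S : Type*} [MeasurableSpace Ω] [MeasurableSpace S]
    (P : Measure Ω) (ξ : ℕ → ℕ → Ω → S)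
    (ϖ : Ω → Measure (Measure S)) (μ : ℕ → Ω → Measure S) : Prop :=
  Measurable ϖ ∧ (∀ ω, IsProbabilityMeasure (ϖ ω)) ∧
  (∀ i, Measurable (μ i)) ∧ (∀ i ω, IsProbabilityMeasure (μ i ω)) ∧
  (∃ πϖ : Ω → Measure (ℕ → Measure S), (∀ ω, IsIIDProduct (ϖ ω) (πϖ ω)) ∧
    ∀ A : Set (ℕ → Measure S), MeasurableSet A →
      P[(A.indicator fun _ => (1:ℝ)) ∘ (fun ω (i : ℕ) => μ i ω) |
          MeasurableSpace.comap ϖ inferInstance]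
        =ᵐ[P] fun ω => (πϖ ω A).toReal) ∧
  (∀ i : ℕ, ∃ πμ : Ω → Measure (ℕ → S), (∀ ω, IsIIDProduct (μ i ω) (πμ ω)) ∧
    ∀ A : Set (ℕ → S), MeasurableSet A →
      P[(A.indicator fun _ => (1:ℝ)) ∘ (fun ω (j : ℕ) => ξ i j ω) |
          MeasurableSpace.comap (μ i) inferInstance]
        =ᵐ[P] fun ω => (πμ ω A).toReal)

open scoped ENNReal

/-! ### Directing random measures -/

/-- The random measure `m` directs the random sequence `X`, that is, `L(X | m) = m^∞`, stated as
the moment identity `E[W(m) ∏_{i ∈ I} 1_{A_i}(X_i)] = E[W(m) ∏_{i ∈ I} m(A_i)]` for every finite `I`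
and every measurable `W ≥ 0`. Measurability of `m` and the fact that it takes probability values are
kept as separate hypotheses. -/
def Directs {Ω E : Type*} [MeasurableSpace Ω] [MeasurableSpace E]
    (P : Measure Ω) (X : Ω → ℕ → E) (m : Ω → Measure E) : Prop :=
  ∀ (I : Finset ℕ) (A : ℕ → Set E), (∀ i, MeasurableSet (A i)) →
    ∀ W : Measure E → ℝ≥0∞, Measurable W →
      ∫⁻ ω, W (m ω) * ∏ i ∈ I, (A i).indicator 1 (X ω i) ∂P
        = ∫⁻ ω, W (m ω) * ∏ i ∈ I, m ω (A i) ∂P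

/-! ### Square-integral estimates and almost sure equality of random measures -/

lemma integral_toReal_mul {Ω : Type*} [MeasurableSpace Ω] {P : Measure Ω}
    {f g : Ω → ℝ≥0∞} (hf : Measurable f) (hg : Measurable g) (hf1 : ∀ ω, f ω ≤ 1)
    (hg1 : ∀ ω, g ω ≤ 1) :
    ∫ ω, (f ω).toReal * (g ω).toReal ∂P = (∫⁻ ω, f ω * g ω ∂P).toReal := by
  rw [← integral_toReal (f := fun ω => f ω * g ω) (hf.mul hg).aemeasurable]
  · simp
  · exact Filter.Eventually.of_forall fun ω =>
      ENNReal.mul_lt_top ((hf1 ω).trans_lt ENNReal.one_lt_top) ((hg1 ω).trans_lt ENNReal.one_lt_top)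

lemma integrable_toReal_mul {Ω : Type*} [MeasurableSpace Ω] {P : Measure Ω} [IsFiniteMeasure P]
    {f g : Ω → ℝ≥0∞} (hf : Measurable f) (hg : Measurable g) (hf1 : ∀ ω, f ω ≤ 1)
    (hg1 : ∀ ω, g ω ≤ 1) :
    Integrable (fun ω => (f ω).toReal * (g ω).toReal) P := by
  refine Integrable.of_bound (hf.ennreal_toReal.mul hg.ennreal_toReal).aestronglyMeasurable 1 ?_
  refine Filter.Eventually.of_forall fun ω => ?_
  have h1 : (f ω).toReal ≤ 1 := ENNReal.toReal_mono ENNReal.one_ne_top (hf1 ω)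
  have h2 : (g ω).toReal ≤ 1 := ENNReal.toReal_mono ENNReal.one_ne_top (hg1 ω)
  rw [Real.norm_of_nonneg (by positivity)]
  exact mul_le_one₀ h1 (by positivity) h2

lemma integral_sub_mul_sub {Ω : Type*} [MeasurableSpace Ω] {P : Measure Ω} [IsFiniteMeasure P]
    {a b c d : Ω → ℝ≥0∞} (ha : Measurable a) (hb : Measurable b) (hc : Measurable c)
    (hd : Measurable d) (ha1 : ∀ ω, a ω ≤ 1) (hb1 : ∀ ω, b ω ≤ 1) (hc1 : ∀ ω, c ω ≤ 1)
    (hd1 : ∀ ω, d ω ≤ 1) :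
    Integrable (fun ω => ((a ω).toReal - (b ω).toReal) * ((c ω).toReal - (d ω).toReal)) P ∧
    ∫ ω, ((a ω).toReal - (b ω).toReal) * ((c ω).toReal - (d ω).toReal) ∂P =
      (∫⁻ ω, a ω * c ω ∂P).toReal - (∫⁻ ω, a ω * d ω ∂P).toReal
        - ((∫⁻ ω, b ω * c ω ∂P).toReal - (∫⁻ ω, b ω * d ω ∂P).toReal) := by
  have iac := integrable_toReal_mul (P := P) ha hc ha1 hc1
  have iad := integrable_toReal_mul (P := P) ha hd ha1 hd1
  have ibc := integrable_toReal_mul (P := P) hb hc hb1 hc1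
  have ibd := integrable_toReal_mul (P := P) hb hd hb1 hd1
  have e : (fun ω => ((a ω).toReal - (b ω).toReal) * ((c ω).toReal - (d ω).toReal)) =
      fun ω => ((a ω).toReal * (c ω).toReal - (a ω).toReal * (d ω).toReal)
        - ((b ω).toReal * (c ω).toReal - (b ω).toReal * (d ω).toReal) := by
    ext ω; ring
  rw [e]
  refine ⟨(iac.sub iad).sub (ibc.sub ibd), ?_⟩
  have h1 := integral_sub (iac.sub iad) (ibc.sub ibd)
  have h2 := integral_sub iac iad
  have h3 := integral_sub ibc ibd
  simp only [Pi.sub_apply] at h1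
  rw [h1, h2, h3, integral_toReal_mul ha hc ha1 hc1, integral_toReal_mul ha hd ha1 hd1,
    integral_toReal_mul hb hc hb1 hc1, integral_toReal_mul hb hd hb1 hd1]

lemma ae_eq_of_integral_sq_nonpos {Ω : Type*} [MeasurableSpace Ω] {P : Measure Ω}
    [IsFiniteMeasure P] {f g : Ω → ℝ≥0∞} (hf : Measurable f) (hg : Measurable g)
    (hf1 : ∀ ω, f ω ≤ 1) (hg1 : ∀ ω, g ω ≤ 1)
    (h : ∫ ω, ((f ω).toReal - (g ω).toReal) * ((f ω).toReal - (g ω).toReal) ∂P ≤ 0) :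
    f =ᵐ[P] g := by
  have hi := (integral_sub_mul_sub (P := P) hf hg hf hg hf1 hg1 hf1 hg1).1
  have h0 := (integral_eq_zero_iff_of_nonneg (fun ω => mul_self_nonneg _) hi).1
    (le_antisymm h (integral_nonneg fun ω => mul_self_nonneg _))
  filter_upwards [h0] with ω hω
  have : (f ω).toReal - (g ω).toReal = 0 := mul_self_eq_zero.1 hω
  exact (ENNReal.toReal_eq_toReal_iff' ((hf1 ω).trans_lt ENNReal.one_lt_top).ne
    ((hg1 ω).trans_lt ENNReal.one_lt_top).ne).1 (sub_eq_zero.1 this)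

/-- The finite intersections of a countable generating family form a countable generating
π-system. -/
lemma exists_countable_piSystem (Y : Type*) [mY : MeasurableSpace Y]
    [MeasurableSpace.CountablyGenerated Y] :
    ∃ C : Set (Set Y), C.Countable ∧ IsPiSystem C ∧ mY = MeasurableSpace.generateFrom C := by
  classical
  obtain ⟨b, hb, hgen⟩ := MeasurableSpace.CountablyGenerated.isCountablyGenerated (α := Y)
  have := hb.to_subtype
  refine ⟨Set.range fun F : Finset b => ⋂ i ∈ F, (i : Set Y), Set.countable_range _, ?_, ?_⟩
  · rintro _ ⟨F, rfl⟩ _ ⟨G, rfl⟩ -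
    exact ⟨F ∪ G, by
      ext x
      simp only [Set.mem_iInter, Set.mem_inter_iff, Finset.mem_union]
      grind⟩
  · refine le_antisymm ?_ (MeasurableSpace.generateFrom_le ?_)
    · conv_lhs => rw [hgen]
      refine MeasurableSpace.generateFrom_mono fun s hs => ⟨{⟨s, hs⟩}, by simp⟩
    · rintro _ ⟨F, rfl⟩
      refine Finset.measurableSet_biInter _ fun i _ => ?_
      rw [hgen]
      exact MeasurableSpace.measurableSet_generateFrom i.2

lemma ae_eq_of_forall_measurableSet {Ω Y : Type*} [MeasurableSpace Ω] [MeasurableSpace Y]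
    [MeasurableSpace.CountablyGenerated Y] {P : Measure Ω} {m m' : Ω → Measure Y}
    (hm : ∀ ω, IsProbabilityMeasure (m ω)) (hm' : ∀ ω, IsProbabilityMeasure (m' ω))
    (h : ∀ A, MeasurableSet A → (fun ω => m ω A) =ᵐ[P] fun ω => m' ω A) : m =ᵐ[P] m' := by
  obtain ⟨C, hC, hpi, hgen⟩ := exists_countable_piSystem Y
  have : ∀ᵐ ω ∂P, ∀ A ∈ C, m ω A = m' ω A := by
    rw [ae_ball_iff hC]
    intro A hA
    refine h A ?_
    rw [hgen]
    exact MeasurableSpace.measurableSet_generateFrom hA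
  filter_upwards [this] with ω hω
  exact ext_of_generate_finite C hgen hpi hω (by simp)

/-! ### Exchangeable sequences -/

/-- Any injection of `ℕ` agrees with a finite permutation on an initial segment. -/
lemma exists_finitePerm_eq (f : ℕ → ℕ) (hf : Function.Injective f) (K : ℕ) :
    ∃ σ : Equiv.Perm ℕ, FinitePerm σ ∧ ∀ i < K, σ i = f i := by
  induction K with
  | zero => exact ⟨1, by simp [FinitePerm], by simp⟩
  | succ K ih =>
    obtain ⟨σ, hσ, hσf⟩ := ih
    refine ⟨Equiv.swap (σ K) (f K) * σ, ?_, fun i hi => ?_⟩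
    -- Composing with this swap corrects the value at `K` and, by injectivity of `σ` and `f`,
    -- leaves the values below `K` alone.
    · refine (hσ.union (Set.toFinite {K, f K})).subset fun n hn => ?_
      by_contra hcon
      simp only [Set.mem_union, Set.mem_ofPred_eq, Set.mem_insert_iff, Set.mem_singleton_iff,
        not_or, not_not] at hcon
      obtain ⟨h1, h2, h3⟩ := hcon
      apply hn
      rw [Equiv.Perm.mul_apply, Equiv.swap_apply_of_ne_of_ne, h1]
      · exact fun h => h2 (σ.injective h)
      · rwa [h1]
    · rw [Equiv.Perm.mul_apply]
      rcases Nat.lt_succ_iff_lt_or_eq.1 hi with h | rfl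
      · rw [hσf i h, Equiv.swap_apply_of_ne_of_ne]
        · rw [← hσf i h]
          exact fun h' => h.ne (σ.injective h')
        · exact fun h' => h.ne (hf h')
      · simp

/-- An exchangeable law is invariant under every injective reindexing: finite-dimensional
marginals see only finitely many coordinates. -/
lemma map_comp_injective {E : Type*} [MeasurableSpace E] (ν : Measure (ℕ → E))
    [IsProbabilityMeasure ν]
    (hν : ∀ σ : Equiv.Perm ℕ, FinitePerm σ → ν.map (fun x j => x (σ j)) = ν)
    (f : ℕ → ℕ) (hf : Function.Injective f) : ν.map (fun x j => x (f j)) = ν := by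
  have hmeas : ∀ g : ℕ → ℕ, Measurable fun (x : ℕ → E) j => x (g j) := fun g => by fun_prop
  have h1 : IsProjectiveLimit ν (fun I : Finset ℕ => ν.map I.restrict) := fun I => rfl
  refine IsProjectiveLimit.unique (P := fun I : Finset ℕ => ν.map I.restrict) (fun I => ?_) h1
  obtain ⟨σ, hσ, hσf⟩ := exists_finitePerm_eq f hf (I.sup id + 1)
  rw [Measure.map_map (by fun_prop) (hmeas f)]
  conv_rhs =>
    beta_reduce
    rw [← hν σ hσ, Measure.map_map (by fun_prop) (hmeas _)]
  congr 1
  ext x i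
  have : (i : ℕ) < I.sup id + 1 := Nat.lt_succ_of_le (Finset.le_sup (f := id) i.2)
  simp [hσf i this]

/-- It suffices to test initial segments: indices outside `I` are given the set `univ`. -/
lemma Directs.of_range {Ω E : Type*} [MeasurableSpace Ω] [MeasurableSpace E]
    {P : Measure Ω} {X : Ω → ℕ → E} {m : Ω → Measure E} (hm : ∀ ω, IsProbabilityMeasure (m ω))
    (h : ∀ (n : ℕ) (A : ℕ → Set E), (∀ i, MeasurableSet (A i)) →
      ∀ W : Measure E → ℝ≥0∞, Measurable W →
        ∫⁻ ω, W (m ω) * ∏ i ∈ Finset.range n, (A i).indicator 1 (X ω i) ∂P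
          = ∫⁻ ω, W (m ω) * ∏ i ∈ Finset.range n, m ω (A i) ∂P) : Directs P X m := by
  intro I A hA W hW
  have key := h (I.sup id + 1) (fun i => if i ∈ I then A i else Set.univ)
    (fun i => by split_ifs <;> simp [hA]) W hW
  have hI : I ⊆ Finset.range (I.sup id + 1) := fun i hi =>
    Finset.mem_range.2 (Nat.lt_succ_of_le (Finset.le_sup (f := id) hi))
  convert! key using 4 with ω ω
  · rw [← Finset.prod_subset hI]
    · exact Finset.prod_congr rfl fun i hi => by simp [hi]
    · intro i _ hi
      simp [hi]
  · rw [← Finset.prod_subset hI]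
    · exact Finset.prod_congr rfl fun i hi => by simp [hi]
    · intro i _ hi
      simp [hi]

lemma Directs.comp {Ω E : Type*} [MeasurableSpace Ω] [MeasurableSpace E]
    {P : Measure Ω} {X : Ω → ℕ → E} (hX : Measurable X) {F : (ℕ → E) → Measure E}
    (hF : Measurable F) (h : Directs (P.map X) id F) : Directs P X (fun ω => F (X ω)) := by
  intro I A hA W hW
  have key := h I A hA W hW
  have hi : ∀ i, Measurable ((A i).indicator (1 : E → ℝ≥0∞)) := fun i =>
    measurable_one.indicator (hA i)
  have hev : ∀ i, Measurable fun x => F x (A i) := fun i =>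
    (Measure.measurable_coe (hA i)).comp hF
  rw [lintegral_map _ hX, lintegral_map _ hX] at key
  · exact key
  · exact (hW.comp hF).mul (Finset.measurable_prod _ fun i _ => hev i)
  · exact (hW.comp hF).mul (Finset.measurable_prod _ fun i _ => (hi i).comp (measurable_pi_apply i))

/-- De Finetti's theorem for an exchangeable law on a standard Borel space. The directing measure is
a measurable function of the sequence, so it transfers to any random sequence with that law. -/
theorem exists_directs {E : Type*} [MeasurableSpace E] [StandardBorelSpace E] [Nonempty E]
    (ν : Measure (ℕ → E)) [IsProbabilityMeasure ν]
    (hν : ∀ σ : Equiv.Perm ℕ, FinitePerm σ → ν.map (fun x j => x (σ j)) = ν) :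
    ∃ F : (ℕ → E) → Measure E, Measurable F ∧ (∀ x, IsProbabilityMeasure (F x)) ∧
      Directs ν id F := by
  let θ : (ℕ → E) → ℕ → E := fun x j => x (j + 1)
  have hθ : Measurable θ := by fun_prop
  have hθν : ν.map θ = ν := map_comp_injective ν hν _ (add_left_injective 1)
  let κ := condDistrib (fun x : ℕ → E => x 0) θ ν
  have hκ : ν ⊗ₘ κ = ν.map (fun x => (θ x, x 0)) := by
    have := compProd_map_condDistrib (mβ := MeasurableSpace.pi) (X := θ) (Y := fun x : ℕ → E => x 0) (μ := ν)
      (measurable_pi_apply 0).aemeasurable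
    rwa [hθν] at this
  have hκm : ∀ A, MeasurableSet A → Measurable fun y => κ y A := fun A hA => κ.measurable_coe hA
  -- `κ` is the conditional law of `x 0` given `θ x`.
  have star : ∀ A, MeasurableSet A → ∀ g : (ℕ → E) → ℝ≥0∞, Measurable g →
      ∫⁻ x, A.indicator 1 (x 0) * g (θ x) ∂ν = ∫⁻ y, κ y A * g y ∂ν := by
    intro A hA g hg
    have hind : Measurable (A.indicator (1 : E → ℝ≥0∞)) := measurable_one.indicator hA
    have hf : Measurable fun p : (ℕ → E) × E => A.indicator 1 p.2 * g p.1 :=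
      (hind.comp measurable_snd).mul (hg.comp measurable_fst)
    have h1 := Measure.lintegral_compProd (μ := ν) (κ := κ) hf
    rw [hκ, lintegral_map hf (by fun_prop)] at h1
    rw [h1]
    refine lintegral_congr fun y => ?_
    dsimp only
    rw [lintegral_mul_const _ hind, lintegral_indicator_one hA]
  -- The same holds given `θ (θ x)`, by the injective reindexing `0, 2, 3, 4, …`.
  have star2 : ∀ A, MeasurableSet A → ∀ g : (ℕ → E) → ℝ≥0∞, Measurable g →
      ∫⁻ x, A.indicator 1 (x 0) * g (θ (θ x)) ∂ν = ∫⁻ y, κ y A * g y ∂ν := by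
    intro A hA g hg
    have hind : Measurable (A.indicator (1 : E → ℝ≥0∞)) := measurable_one.indicator hA
    let f : ℕ → ℕ := fun i => if i = 0 then 0 else i + 1
    have hf : Function.Injective f := by
      intro i j h
      simp only [f] at h
      split_ifs at h <;> omega
    rw [← star A hA g hg]
    conv_rhs => rw [← map_comp_injective ν hν f hf]
    rw [lintegral_map _ (by fun_prop)]
    · rfl
    · exact (hind.comp (measurable_pi_apply 0)).mul (hg.comp hθ)
  -- Both correlations below equal the common second moment, so the difference vanishes in `L²`.
  have inv : (fun x => κ (θ x)) =ᵐ[ν] fun x => κ x := by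
    refine ae_eq_of_forall_measurableSet (fun _ => inferInstance) (fun _ => inferInstance) ?_
    intro A hA
    have m1 := hκm A hA
    have m2 : Measurable fun x => κ (θ x) A := m1.comp hθ
    have e1 : ∫⁻ x, κ x A * κ (θ x) A ∂ν = ∫⁻ x, κ x A * κ x A ∂ν := by
      rw [← star A hA _ m2, star2 A hA _ m1]
    have e2 : ∫⁻ x, κ (θ x) A * κ (θ x) A ∂ν = ∫⁻ x, κ x A * κ x A ∂ν := by
      conv_rhs => rw [← hθν]
      rw [lintegral_map (f := fun x => κ x A * κ x A) (m1.mul m1) hθ]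
    have e3 : ∫⁻ x, κ (θ x) A * κ x A ∂ν = ∫⁻ x, κ x A * κ x A ∂ν := by
      rw [← e1]
      simp only [mul_comm]
    refine ae_eq_of_integral_sq_nonpos m2 m1 (fun _ => prob_le_one) (fun _ => prob_le_one) ?_
    rw [(integral_sub_mul_sub m2 m1 m2 m1 (fun _ => prob_le_one) (fun _ => prob_le_one)
      (fun _ => prob_le_one) (fun _ => prob_le_one)).2, e1, e2, e3]
    simp
  refine ⟨fun x => κ x, κ.measurable, fun x => inferInstance, Directs.of_range
    (fun x => inferInstance) ?_⟩
  intro n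
  induction n with
  | zero => simp
  | succ n ih =>
    intro A hA W hW
    have hev : Measurable fun μ : Measure E => μ (A 0) := Measure.measurable_coe (hA 0)
    have hi : ∀ i, Measurable ((A i).indicator (1 : E → ℝ≥0∞)) := fun i =>
      measurable_one.indicator (hA i)
    have hg : Measurable fun y : ℕ → E =>
        W (κ y) * ∏ i ∈ Finset.range n, (A (i + 1)).indicator 1 (y i) :=
      (hW.comp κ.measurable).mul
        (Finset.measurable_prod _ fun i _ => (hi _).comp (measurable_pi_apply i))
    -- Replace `κ x` by `κ (θ x)`, integrate out `x 0`, and absorb the new factor into `W`.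
    calc ∫⁻ x, W (κ x) * ∏ i ∈ Finset.range (n + 1), (A i).indicator 1 (id x i) ∂ν
        = ∫⁻ x, (A 0).indicator 1 (x 0) * (W (κ (θ x)) *
            ∏ i ∈ Finset.range n, (A (i + 1)).indicator 1 (θ x i)) ∂ν := by
          refine lintegral_congr_ae ?_
          filter_upwards [inv] with x hx
          rw [hx, Finset.prod_range_succ']
          simp only [id, θ]
          ring
      _ = ∫⁻ y, κ y (A 0) * (W (κ y) *
            ∏ i ∈ Finset.range n, (A (i + 1)).indicator 1 (y i)) ∂ν := star _ (hA 0) _ hg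
      _ = ∫⁻ y, (W (κ y) * κ y (A 0)) *
            ∏ i ∈ Finset.range n, (A (i + 1)).indicator 1 (id y i) ∂ν := by
          refine lintegral_congr fun y => ?_
          simp only [id]
          ring
      _ = ∫⁻ y, (W (κ y) * κ y (A 0)) * ∏ i ∈ Finset.range n, κ y (A (i + 1)) ∂ν :=
          ih (fun i => A (i + 1)) (fun i => hA _) (fun μ => W μ * μ (A 0)) (hW.mul hev)
      _ = _ := by
          refine lintegral_congr fun y => ?_
          rw [Finset.prod_range_succ']
          ring

/-! ### Conditional laws -/

lemma prod_indicator_one {E : Type*} (I : Finset ℕ) (A : ℕ → Set E) (x : ℕ → E) :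
    ∏ i ∈ I, (A i).indicator (1 : E → ℝ≥0∞) (x i)
      = ((I : Set ℕ).pi A).indicator 1 x := by
  classical
  simp only [Set.indicator_apply, Pi.one_apply, Finset.prod_ite_zero, Finset.prod_const_one]
  exact if_congr Iff.rfl rfl rfl

lemma Directs.measure_eq {Ω E : Type*} [MeasurableSpace Ω] [MeasurableSpace E]
    {P : Measure Ω} {X : Ω → ℕ → E} {m : Ω → Measure E} (hX : Measurable X) (hm : Measurable m)
    (h : Directs P X m) (I : Finset ℕ) (A : ℕ → Set E) (hA : ∀ i, MeasurableSet (A i))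
    {B : Set (Measure E)} (hB : MeasurableSet B) :
    P.restrict (m ⁻¹' B) (X ⁻¹' (I : Set ℕ).pi A)
      = ∫⁻ ω in m ⁻¹' B, ∏ i ∈ I, m ω (A i) ∂P := by
  have key := h I A hA (B.indicator 1) (measurable_one.indicator hB)
  have hC : MeasurableSet (X ⁻¹' (I : Set ℕ).pi A) :=
    hX (MeasurableSet.pi I.countable_toSet fun i _ => hA i)
  rw [← lintegral_indicator (hm hB), ← lintegral_indicator_one hC, ← lintegral_indicator (hm hB)]
  convert! key using 3 with ω ω
  · by_cases hω : m ω ∈ B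
    · rw [Set.indicator_of_mem (show ω ∈ m ⁻¹' B from hω), Set.indicator_of_mem hω,
        Pi.one_apply, one_mul]
      exact (prod_indicator_one I A (X ω)).symm
    · simp [hω]
  · by_cases hω : m ω ∈ B <;> simp [hω]

lemma isIIDProduct_infinitePi {E : Type*} [MeasurableSpace E] (ν : Measure E)
    [IsProbabilityMeasure ν] : IsIIDProduct ν (Measure.infinitePi fun _ : ℕ => ν) := by
  refine ⟨inferInstance, fun n A hA => ?_⟩
  have := Measure.infinitePi_pi (μ := fun _ : ℕ => ν) (s := Finset.range n)
    (t := fun i => if h : i < n then A ⟨i, h⟩ else Set.univ)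
    (fun i _ => by split_ifs <;> simp [hA])
  rw [Finset.prod_range] at this
  convert! this using 2
  · ext x
    simp only [Set.mem_ofPred_eq, Set.mem_pi, Finset.coe_range, Set.mem_Iio]
    refine ⟨fun h i hi => ?_, fun h i => ?_⟩
    · simpa [hi] using h ⟨i, hi⟩
    · simpa using h i i.2
  · simp

/-- A directing random measure gives the conditional law `L(X | m) = m^∞`. -/
lemma Directs.exists_condExp {Ω E : Type*} [MeasurableSpace Ω] [MeasurableSpace E]
    {P : Measure Ω} [IsProbabilityMeasure P] {X : Ω → ℕ → E} {m : Ω → Measure E}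
    (hX : Measurable X) (hm : Measurable m) (hmp : ∀ ω, IsProbabilityMeasure (m ω))
    (h : Directs P X m) :
    ∃ π : Ω → Measure (ℕ → E), (∀ ω, IsIIDProduct (m ω) (π ω)) ∧
      ∀ A : Set (ℕ → E), MeasurableSet A →
        P[(A.indicator fun _ => (1:ℝ)) ∘ X | MeasurableSpace.comap m inferInstance]
          =ᵐ[P] fun ω => (π ω A).toReal := by
  let π : Ω → Measure (ℕ → E) := fun ω => Measure.infinitePi fun _ : ℕ => m ω
  have hgen := (generateFrom_squareCylinders (α := fun _ : ℕ => E)).symm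
  have hpi := isPiSystem_squareCylinders (α := fun _ : ℕ => E)
    (C := fun _ => {s : Set E | MeasurableSet s}) (fun _ => MeasurableSpace.isPiSystem_measurableSet)
    (fun _ => MeasurableSet.univ)
  have hle : MeasurableSpace.comap m inferInstance ≤ (inferInstance : MeasurableSpace Ω) :=
    hm.comap_le
  -- `π` depends measurably on `m`: check it on boxes.
  have hπ : @Measurable _ _ (MeasurableSpace.comap m inferInstance) _ π := by
    refine @Measurable.measure_of_isPiSystem_of_isProbabilityMeasure _ _
      (MeasurableSpace.comap m inferInstance) _ π (fun ω => inferInstance) _ hgen hpi ?_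
    rintro _ ⟨I, A, hA, rfl⟩
    have hA' : ∀ i, MeasurableSet (A i) := fun i => hA i (Set.mem_univ i)
    simp only [π, Measure.infinitePi_pi _ (fun i _ => hA' i)]
    exact (Finset.measurable_prod I fun i _ => Measure.measurable_coe (hA' i)).comp
      (comap_measurable m)
  have hπ0 : Measurable π := hπ.mono hle le_rfl
  -- The π-λ theorem extends the identity from boxes to all measurable sets.
  have key : ∀ B : Set (Measure E), MeasurableSet B →
      (P.restrict (m ⁻¹' B)).map X = (P.restrict (m ⁻¹' B)).bind π := by
    intro B hB
    refine ext_of_generate_finite _ hgen hpi ?_ ?_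
    · rintro _ ⟨I, A, hA, rfl⟩
      have hA' : ∀ i, MeasurableSet (A i) := fun i => hA i (Set.mem_univ i)
      have hbox : MeasurableSet ((I : Set ℕ).pi A) :=
        MeasurableSet.pi I.countable_toSet fun i _ => hA' i
      rw [Measure.map_apply hX hbox, h.measure_eq hX hm I A hA' hB,
        Measure.bind_apply hbox hπ0.aemeasurable]
      refine lintegral_congr fun ω => ?_
      simp only [π, Measure.infinitePi_pi _ (fun i _ => hA' i)]
    · rw [Measure.map_apply hX MeasurableSet.univ,
        Measure.bind_apply MeasurableSet.univ hπ0.aemeasurable]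
      simp [π]
  refine ⟨π, fun ω => isIIDProduct_infinitePi _, fun A hA => Filter.EventuallyEq.symm ?_⟩
  have hcomp : (A.indicator fun _ => (1:ℝ)) ∘ X = (X ⁻¹' A).indicator 1 := rfl
  have hmeas : Measurable[MeasurableSpace.comap m inferInstance] fun ω => (π ω A).toReal :=
    ((Measure.measurable_coe hA).comp hπ).ennreal_toReal
  have hint : Integrable (fun ω => (π ω A).toReal) P := by
    refine Integrable.of_bound (hmeas.mono hle le_rfl).aestronglyMeasurable 1 ?_
    exact Filter.Eventually.of_forall fun ω => by
      rw [Real.norm_of_nonneg ENNReal.toReal_nonneg]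
      exact ENNReal.toReal_mono ENNReal.one_ne_top prob_le_one
  refine ae_eq_condExp_of_forall_setIntegral_eq hle ?_ (fun s _ _ => hint.integrableOn) ?_
    hmeas.aestronglyMeasurable
  · rw [hcomp]
    exact (integrable_const 1).indicator (hX hA)
  · rintro _ ⟨B, hB, rfl⟩ -
    have := congrArg (fun Q : Measure (ℕ → E) => (Q A).toReal) (key B hB)
    simp only [Measure.map_apply hX hA, Measure.bind_apply hA hπ0.aemeasurable] at this
    rw [hcomp, integral_indicator_one (hX hA), Measure.real, this, integral_toReal]
    · exact ((Measure.measurable_coe hA).comp hπ0).aemeasurable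
    · exact Filter.Eventually.of_forall fun ω => measure_lt_top _ _

/-- Converse of `Directs.exists_condExp`. -/
lemma Directs.of_condExp {Ω E : Type*} [MeasurableSpace Ω] [MeasurableSpace E]
    {P : Measure Ω} [IsProbabilityMeasure P] {X : Ω → ℕ → E} {m : Ω → Measure E}
    (hX : Measurable X) (hm : Measurable m) (hmp : ∀ ω, IsProbabilityMeasure (m ω))
    {π : Ω → Measure (ℕ → E)} (hπ : ∀ ω, IsIIDProduct (m ω) (π ω))
    (h : ∀ A : Set (ℕ → E), MeasurableSet A →
        P[(A.indicator fun _ => (1:ℝ)) ∘ X | MeasurableSpace.comap m inferInstance]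
          =ᵐ[P] fun ω => (π ω A).toReal) : Directs P X m := by
  refine Directs.of_range hmp fun n A hA W hW => ?_
  have hle : MeasurableSpace.comap m inferInstance ≤ (inferInstance : MeasurableSpace Ω) :=
    hm.comap_le
  have hbox : MeasurableSet ((Finset.range n : Set ℕ).pi A) :=
    MeasurableSet.pi (Finset.countable_toSet _) fun i _ => hA i
  have hπbox : ∀ ω, π ω ((Finset.range n : Set ℕ).pi A) = ∏ i ∈ Finset.range n, m ω (A i) := by
    intro ω
    have := (hπ ω).2 n (fun i => A i) (fun i => hA i)
    rw [Finset.prod_range, ← this]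
    congr 1
    ext x
    simp only [Set.mem_ofPred_eq, Set.mem_pi, Finset.coe_range, Set.mem_Iio]
    exact ⟨fun h i => h i i.2, fun h i hi => h ⟨i, hi⟩⟩
  have hev : Measurable fun μ : Measure E => ∏ i ∈ Finset.range n, μ (A i) :=
    Finset.measurable_prod _ fun i _ => Measure.measurable_coe (hA i)
  have hp1 : ∀ ω, ∏ i ∈ Finset.range n, m ω (A i) ≤ 1 := fun ω =>
    Finset.prod_le_one' fun i _ => prob_le_one
  -- It suffices to identify the two measures on the space of values of `m`.
  have key : (P.restrict (X ⁻¹' (Finset.range n : Set ℕ).pi A)).map m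
      = (P.map m).withDensity fun μ => ∏ i ∈ Finset.range n, μ (A i) := by
    ext B hB
    rw [Measure.map_apply hm hB, Measure.restrict_apply (hm hB), withDensity_apply _ hB,
      setLIntegral_map hB hev hm]
    have hfin : ∫⁻ ω in m ⁻¹' B, ∏ i ∈ Finset.range n, m ω (A i) ∂P ≠ ∞ :=
      ((lintegral_mono hp1).trans_lt (by simp)).ne
    rw [← ENNReal.toReal_eq_toReal_iff' (measure_ne_top _ _) hfin]
    have hcomp : ((((Finset.range n : Set ℕ).pi A).indicator fun _ => (1:ℝ)) ∘ X)
      = (X ⁻¹' (Finset.range n : Set ℕ).pi A).indicator 1 := rfl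
    have h1 := setIntegral_condExp (μ := P) hle (s := m ⁻¹' B)
      (f := (((Finset.range n : Set ℕ).pi A).indicator fun _ => (1:ℝ)) ∘ X)
      (by rw [hcomp]; exact (integrable_const 1).indicator (hX hbox)) ⟨B, hB, rfl⟩
    rw [setIntegral_congr_ae (hm hB) ((h _ hbox).mono fun ω hω _ => hω), hcomp,
      integral_indicator_one (hX hbox), Measure.real, Measure.restrict_apply (hX hbox)] at h1
    rw [Set.inter_comm, ← h1, ← integral_toReal
      (f := fun ω => ∏ i ∈ Finset.range n, m ω (A i)) (hev.comp hm).aemeasurable]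
    · simp only [hπbox]
    · exact Filter.Eventually.of_forall fun ω => (hp1 ω).trans_lt ENNReal.one_lt_top
  have h2 := congrArg (fun Q => ∫⁻ μ, W μ ∂Q) key
  rw [lintegral_map hW hm, lintegral_withDensity_eq_lintegral_mul _ hev hW,
    lintegral_map (hev.mul hW) hm, ← lintegral_indicator (hX hbox)] at h2
  convert! h2 using 3 with ω ω
  · rw [prod_indicator_one]
    by_cases hω : X ω ∈ (Finset.range n : Set ℕ).pi A
    · rw [Set.indicator_of_mem hω, Set.indicator_of_mem (show ω ∈ X ⁻¹' (Finset.range n : Set ℕ).pi A from hω),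
        Pi.one_apply, mul_one]
    · rw [Set.indicator_of_notMem hω, Set.indicator_of_notMem (show ω ∉ X ⁻¹' (Finset.range n : Set ℕ).pi A from hω),
        mul_zero]
  · simp [mul_comm]

/-! ### Uniqueness -/

lemma Directs.congr {Ω E : Type*} [MeasurableSpace Ω] [MeasurableSpace E]
    {P : Measure Ω} {X X' : Ω → ℕ → E} {m : Ω → Measure E} (hX : X' =ᵐ[P] X)
    (h : Directs P X' m) : Directs P X m := by
  intro I A hA W hW
  rw [← h I A hA W hW]
  refine lintegral_congr_ae ?_
  filter_upwards [hX] with ω hω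
  rw [hω]

/-- The deviations `1_A(X_i) - m(A)` are pairwise orthogonal, with second moment at most `1`. -/
lemma Directs.integral_deviation {Ω E : Type*} [MeasurableSpace Ω] [MeasurableSpace E]
    {P : Measure Ω} [IsProbabilityMeasure P] {X : Ω → ℕ → E} {m : Ω → Measure E}
    (hX : Measurable X) (hm : Measurable m) (hmp : ∀ ω, IsProbabilityMeasure (m ω))
    (h : Directs P X m) {A : Set E} (hA : MeasurableSet A) (i j : ℕ) :
    Integrable (fun ω => ((A.indicator 1 (X ω i) : ℝ≥0∞).toReal - (m ω A).toReal)
      * ((A.indicator 1 (X ω j) : ℝ≥0∞).toReal - (m ω A).toReal)) P ∧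
    ∫ ω, ((A.indicator 1 (X ω i) : ℝ≥0∞).toReal - (m ω A).toReal)
      * ((A.indicator 1 (X ω j) : ℝ≥0∞).toReal - (m ω A).toReal) ∂P ≤ if i = j then 1 else 0 := by
  have hZ : ∀ i, Measurable fun ω => (A.indicator 1 (X ω i) : ℝ≥0∞) := fun i =>
    (measurable_one.indicator hA).comp ((measurable_pi_apply i).comp hX)
  have hZ1 : ∀ i ω, (A.indicator 1 (X ω i) : ℝ≥0∞) ≤ 1 := fun i ω =>
    Set.indicator_le_self' (fun _ _ => zero_le) (X ω i)
  have hev : Measurable fun μ : Measure E => μ A := Measure.measurable_coe hA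
  have hM : Measurable fun ω => m ω A := hev.comp hm
  have hM1 : ∀ ω, m ω A ≤ 1 := fun ω => prob_le_one
  obtain ⟨h1, h2⟩ := integral_sub_mul_sub (P := P) (hZ i) hM (hZ j) hM (hZ1 i) hM1 (hZ1 j) hM1
  refine ⟨h1, ?_⟩
  have e1 : ∀ k, ∫⁻ ω, m ω A * A.indicator 1 (X ω k) ∂P = ∫⁻ ω, m ω A * m ω A ∂P := by
    intro k
    simpa using h {k} (fun _ => A) (fun _ => hA) (fun μ => μ A) hev
  have e2 : ∫⁻ ω, A.indicator 1 (X ω i) * m ω A ∂P = ∫⁻ ω, m ω A * m ω A ∂P := by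
    rw [← e1 i]
    simp only [mul_comm]
  rw [h2, e1, e2]
  split_ifs with hij
  · have : (∫⁻ ω, A.indicator 1 (X ω i) * A.indicator 1 (X ω j) ∂P).toReal ≤ 1 := by
      refine ENNReal.toReal_mono (b := 1) ENNReal.one_ne_top ?_
      calc ∫⁻ ω, A.indicator 1 (X ω i) * A.indicator 1 (X ω j) ∂P ≤ ∫⁻ _, 1 ∂P :=
            lintegral_mono fun ω => mul_le_one' (hZ1 i ω) (hZ1 j ω)
        _ = 1 := by simp
    have h0 : 0 ≤ (∫⁻ ω, m ω A * m ω A ∂P).toReal := ENNReal.toReal_nonneg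
    linarith
  · have e3 := h {i, j} (fun _ => A) (fun _ => hA) (fun _ => 1) measurable_const
    simp only [Finset.prod_pair hij, one_mul] at e3
    rw [e3]
    simp

/-- The `L²` law of large numbers for a directed sequence. -/
lemma Directs.integral_sum_deviation_le {Ω E : Type*} [MeasurableSpace Ω] [MeasurableSpace E]
    {P : Measure Ω} [IsProbabilityMeasure P] {X : Ω → ℕ → E} {m : Ω → Measure E}
    (hX : Measurable X) (hm : Measurable m) (hmp : ∀ ω, IsProbabilityMeasure (m ω))
    (h : Directs P X m) {A : Set E} (hA : MeasurableSet A) (n : ℕ) :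
    Integrable (fun ω => (∑ i ∈ Finset.range n,
      ((A.indicator 1 (X ω i) : ℝ≥0∞).toReal - (m ω A).toReal)) ^ 2) P ∧
    ∫ ω, (∑ i ∈ Finset.range n,
      ((A.indicator 1 (X ω i) : ℝ≥0∞).toReal - (m ω A).toReal)) ^ 2 ∂P ≤ n := by
  have hd := h.integral_deviation hX hm hmp hA
  simp only [sq, Finset.sum_mul_sum]
  have hi : ∀ i ∈ Finset.range n, Integrable (fun ω => ∑ j ∈ Finset.range n,
      ((A.indicator 1 (X ω i) : ℝ≥0∞).toReal - (m ω A).toReal)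
      * ((A.indicator 1 (X ω j) : ℝ≥0∞).toReal - (m ω A).toReal)) P := fun i _ =>
    integrable_finsetSum _ fun j _ => (hd i j).1
  refine ⟨integrable_finsetSum _ hi, ?_⟩
  rw [integral_finsetSum _ hi]
  calc _ = ∑ i ∈ Finset.range n, ∑ j ∈ Finset.range n, _ :=
        Finset.sum_congr rfl fun i _ => integral_finsetSum _ fun j _ => (hd i j).1
    _ ≤ ∑ i ∈ Finset.range n, ∑ j ∈ Finset.range n, if i = j then (1 : ℝ) else 0 :=
        Finset.sum_le_sum fun i _ => Finset.sum_le_sum fun j _ => (hd i j).2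
    _ = n := by
      rw [Finset.sum_congr rfl fun i hi => by rw [Finset.sum_ite_eq, if_pos hi]]
      simp

/-- Two random measures directing the same sequence agree almost surely on each measurable set,
since both are the limit of the same empirical frequencies. -/
lemma Directs.ae_eq_apply {Ω E : Type*} [MeasurableSpace Ω] [MeasurableSpace E]
    {P : Measure Ω} [IsProbabilityMeasure P] {X : Ω → ℕ → E} {m m' : Ω → Measure E}
    (hX : Measurable X) (hm : Measurable m) (hmp : ∀ ω, IsProbabilityMeasure (m ω))
    (h : Directs P X m) (hm' : Measurable m') (hmp' : ∀ ω, IsProbabilityMeasure (m' ω))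
    (h' : Directs P X m') {A : Set E} (hA : MeasurableSet A) :
    (fun ω => m ω A) =ᵐ[P] fun ω => m' ω A := by
  have hM : Measurable fun ω => m ω A := (Measure.measurable_coe hA).comp hm
  have hM' : Measurable fun ω => m' ω A := (Measure.measurable_coe hA).comp hm'
  refine ae_eq_of_integral_sq_nonpos hM hM' (fun _ => prob_le_one) (fun _ => prob_le_one) ?_
  set c := ∫ ω, ((m ω A).toReal - (m' ω A).toReal) * ((m ω A).toReal - (m' ω A).toReal) ∂P
    with hc
  have hint := (integral_sub_mul_sub (P := P) hM hM' hM hM' (fun _ => prob_le_one)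
    (fun _ => prob_le_one) (fun _ => prob_le_one) (fun _ => prob_le_one)).1
  have bound : ∀ n : ℕ, (n : ℝ) ^ 2 * c ≤ 4 * n := by
    intro n
    obtain ⟨i1, b1⟩ := h.integral_sum_deviation_le hX hm hmp hA n
    obtain ⟨i2, b2⟩ := h'.integral_sum_deviation_le hX hm' hmp' hA n
    rw [hc, ← integral_const_mul]
    calc ∫ ω, (n : ℝ) ^ 2 * (((m ω A).toReal - (m' ω A).toReal)
          * ((m ω A).toReal - (m' ω A).toReal)) ∂P
        ≤ ∫ ω, (2 * (∑ i ∈ Finset.range n,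
            ((A.indicator 1 (X ω i) : ℝ≥0∞).toReal - (m ω A).toReal)) ^ 2
          + 2 * (∑ i ∈ Finset.range n,
            ((A.indicator 1 (X ω i) : ℝ≥0∞).toReal - (m' ω A).toReal)) ^ 2) ∂P := by
          refine integral_mono (hint.const_mul _) ((i1.const_mul 2).add (i2.const_mul 2)) ?_
          intro ω
          simp only [Finset.sum_sub_distrib, Finset.sum_const, Finset.card_range, nsmul_eq_mul]
          -- `n (a - b) = (s - n b) - (s - n a)` and `(x - y)² ≤ 2 x² + 2 y²`
          nlinarith [sq_nonneg ((∑ i ∈ Finset.range n, (A.indicator 1 (X ω i) : ℝ≥0∞).toReal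
              - n * (m ω A).toReal) + (∑ i ∈ Finset.range n,
                (A.indicator 1 (X ω i) : ℝ≥0∞).toReal - n * (m' ω A).toReal))]
      _ ≤ 4 * (n : ℝ) := by
          rw [integral_add (i1.const_mul 2) (i2.const_mul 2), integral_const_mul,
            integral_const_mul]
          linarith
  by_contra! hpos
  obtain ⟨n, hn⟩ := exists_nat_gt (4 / c)
  have hn0 : (0 : ℝ) < n := (by positivity : 0 < 4 / c).trans hn
  rw [div_lt_iff₀ hpos] at hn
  have := bound n
  nlinarith

/-- Almost sure equality on each set implies almost sure equality for random measures on `Measure S`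
that are carried by probability measures. On that carrier the evaluations at the sets of a countable
generating π-system of `S` generate the σ-algebra, which reduces the claim to a countable product. -/
lemma ae_eq_of_forall_measurableSet_measure {Ω S : Type*} [MeasurableSpace Ω] [MeasurableSpace S]
    [MeasurableSpace.CountablyGenerated S] {P : Measure Ω} {m m' : Ω → Measure (Measure S)}
    (hm : ∀ ω, IsProbabilityMeasure (m ω)) (hm' : ∀ ω, IsProbabilityMeasure (m' ω))
    (hmc : ∀ᵐ ω ∂P, ∀ᵐ ν ∂(m ω), IsProbabilityMeasure ν)
    (hmc' : ∀ᵐ ω ∂P, ∀ᵐ ν ∂(m' ω), IsProbabilityMeasure ν)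
    (h : ∀ A, MeasurableSet A → (fun ω => m ω A) =ᵐ[P] fun ω => m' ω A) : m =ᵐ[P] m' := by
  obtain ⟨C, hC, hpi, hgen⟩ := exists_countable_piSystem S
  have := hC.to_subtype
  have hCm : ∀ c : C, MeasurableSet (c : Set S) := fun c => by
    rw [hgen]
    exact MeasurableSpace.measurableSet_generateFrom c.2
  let φ : Measure S → C → ℝ≥0∞ := fun ν c => ν c
  have hφ : Measurable φ := measurable_pi_lambda _ fun c => Measure.measurable_coe (hCm c)
  -- On probability measures, `φ` generates the σ-algebra of `Measure S`.
  have hD : ∀ A : Set (Measure S), MeasurableSet A → ∃ D : Set (C → ℝ≥0∞), MeasurableSet D ∧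
      ∀ ν : Measure S, IsProbabilityMeasure ν → (ν ∈ A ↔ φ ν ∈ D) := by
    intro A hA
    let ι : {ν : Measure S // IsProbabilityMeasure ν} → Measure S := Subtype.val
    have hι : @Measurable _ _ (MeasurableSpace.comap (φ ∘ ι) inferInstance) _ ι := by
      refine @Measurable.measure_of_isPiSystem_of_isProbabilityMeasure _ _
        (MeasurableSpace.comap (φ ∘ ι) inferInstance) _ ι (fun ν => ν.2) C hgen hpi ?_
      intro c hc
      exact (measurable_pi_apply (⟨c, hc⟩ : C)).comp (comap_measurable (φ ∘ ι))
    obtain ⟨D, hD, hDA⟩ := hι hA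
    refine ⟨D, hD, fun ν hν => ?_⟩
    exact (Set.ext_iff.1 hDA ⟨ν, hν⟩).symm
  have hmap : (fun ω => (m ω).map φ) =ᵐ[P] fun ω => (m' ω).map φ := by
    refine ae_eq_of_forall_measurableSet
      (fun ω => Measure.isProbabilityMeasure_map hφ.aemeasurable)
      (fun ω => Measure.isProbabilityMeasure_map hφ.aemeasurable) fun D hD => ?_
    simp only [Measure.map_apply hφ hD]
    exact h _ (hφ hD)
  filter_upwards [hmap, hmc, hmc'] with ω h1 h2 h3
  ext A hA
  obtain ⟨D, hDm, hDA⟩ := hD A hA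
  have e : ∀ μ : Measure (Measure S), (∀ᵐ ν ∂μ, IsProbabilityMeasure ν) → μ A = μ.map φ D := by
    intro μ hμ
    rw [Measure.map_apply hφ hDm]
    refine measure_congr ?_
    filter_upwards [hμ] with ν hν
    exact propext (hDA ν hν)
  rw [e _ h2, e _ h3, h1]

lemma Directs.ae_isProbabilityMeasure {Ω S : Type*} [MeasurableSpace Ω] [MeasurableSpace S]
    {P : Measure Ω} {X : Ω → ℕ → Measure S} {m : Ω → Measure (Measure S)} (hm : Measurable m)
    (hX : ∀ ω i, IsProbabilityMeasure (X ω i)) (h : Directs P X m) :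
    ∀ᵐ ω ∂P, ∀ᵐ ν ∂(m ω), IsProbabilityMeasure ν := by
  have hA : MeasurableSet {ν : Measure S | ν Set.univ = 1}ᶜ :=
    ((Measure.measurable_coe MeasurableSet.univ) (measurableSet_singleton 1)).compl
  have key := h {0} (fun _ => {ν : Measure S | ν Set.univ = 1}ᶜ) (fun _ => hA) (fun _ => 1)
    measurable_const
  have h0 : ∀ ω, X ω 0 Set.univ = 1 := fun ω => (hX ω 0).measure_univ
  simp only [Finset.prod_singleton, one_mul, Set.indicator_apply, Set.mem_compl_iff,
    Set.mem_ofPred_eq, h0, not_true, if_false, lintegral_zero] at key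
  have := (lintegral_eq_zero_iff ((Measure.measurable_coe hA).comp hm)).1 key.symm
  filter_upwards [this] with ω hω
  have : ∀ᵐ ν ∂(m ω), ν Set.univ = 1 := hω
  filter_upwards [this] with ν hν
  exact ⟨hν⟩

/-! ### Row exchangeable arrays -/

/-- de Finetti theorem for row exchangeable arrays: there exist an a.s.-unique random
probability measure `ϖ` on `M₁(S)` (the row distribution generator) and an a.s.-unique
sequence `(μ_i)` of random probability measures on `S` (the row distributions) with
`L(μ | ϖ) = ϖ^∞` and `L(ξ_i | μ_i) = μ_i^∞` a.s. -/
theorem stmt16 {Ω S : Type*} [MeasurableSpace Ω]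
    [MetricSpace S] [CompleteSpace S] [SeparableSpace S] [MeasurableSpace S] [BorelSpace S]
    (P : Measure Ω) [IsProbabilityMeasure P]
    (ξ : ℕ → ℕ → Ω → S) (hξ : ∀ i j, Measurable (ξ i j))
    (hre : RowExchangeable P ξ) :
    ∃ (ϖ : Ω → Measure (Measure S)) (μ : ℕ → Ω → Measure S),
      DeFinettiDirects P ξ ϖ μ ∧
      ∀ (ϖ' : Ω → Measure (Measure S)) (μ' : ℕ → Ω → Measure S),
        DeFinettiDirects P ξ ϖ' μ' → ϖ' =ᵐ[P] ϖ ∧ ∀ i, μ' i =ᵐ[P] μ i := by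
  obtain ⟨hrow, harr⟩ := hre
  have : SecondCountableTopology S := UniformSpace.secondCountable_of_separable S
  obtain ⟨ω₀⟩ : Nonempty Ω := nonempty_of_isProbabilityMeasure P
  have : Nonempty S := ⟨ξ 0 0 ω₀⟩
  let row : ℕ → Ω → ℕ → S := fun i ω j => ξ i j ω
  let arr : Ω → ℕ → ℕ → S := fun ω i j => ξ i j ω
  have hrowm : ∀ i, Measurable (row i) := fun i => measurable_pi_lambda _ fun j => hξ i j
  have harrm : Measurable arr := measurable_pi_lambda _ fun i => hrowm i
  have := Measure.isProbabilityMeasure_map (μ := P) (hrowm 0).aemeasurable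
  have := Measure.isProbabilityMeasure_map (μ := P) harrm.aemeasurable
  obtain ⟨F, hF, hFp, hFd⟩ := exists_directs (P.map (row 0)) fun σ hσ => by
    rw [Measure.map_map (by fun_prop) (hrowm 0)]
    exact hrow 0 σ hσ
  obtain ⟨G, hG, hGp, hGd⟩ := exists_directs (P.map arr) fun σ hσ => by
    rw [Measure.map_map (by fun_prop) harrm]
    exact harr σ hσ
  -- All rows have the law of row `0`, so the same `F` directs each of them.
  have hlaw : ∀ i, P.map (row i) = P.map (row 0) := by
    intro i
    have hs : FinitePerm (Equiv.swap 0 i) := by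
      refine (Set.toFinite {0, i}).subset fun n hn => ?_
      by_contra hcon
      simp only [Set.mem_insert_iff, Set.mem_singleton_iff, not_or] at hcon
      exact hn (Equiv.swap_apply_of_ne_of_ne hcon.1 hcon.2)
    have h0 := congrArg (fun Q : Measure (ℕ → ℕ → S) => Q.map fun x => x 0) (harr _ hs)
    rw [Measure.map_map (measurable_pi_apply 0)
        (measurable_pi_lambda _ fun k => hrowm (Equiv.swap 0 i k)),
      Measure.map_map (measurable_pi_apply 0) harrm] at h0
    simpa [Function.comp_def, row] using h0
  let μ : ℕ → Ω → Measure S := fun i ω => F (row i ω)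
  let ϖ : Ω → Measure (Measure S) := fun ω => (G (arr ω)).map F
  have hμm : ∀ i, Measurable (μ i) := fun i => hF.comp (hrowm i)
  have hμp : ∀ i ω, IsProbabilityMeasure (μ i ω) := fun i ω => hFp _
  have hϖm : Measurable ϖ := (Measure.measurable_map F hF).comp (hG.comp harrm)
  have hϖp : ∀ ω, IsProbabilityMeasure (ϖ ω) := fun ω =>
    Measure.isProbabilityMeasure_map hF.aemeasurable
  have hμd : ∀ i, Directs P (row i) (μ i) := fun i =>
    Directs.comp (hrowm i) hF (by rw [hlaw i]; exact hFd)
  have hXm : Measurable fun ω i => μ i ω := measurable_pi_lambda _ hμm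
  have hϖd : Directs P (fun ω i => μ i ω) ϖ := by
    intro I A hA W hW
    have := Directs.comp harrm hG hGd I (fun i => F ⁻¹' A i) (fun i => hF (hA i))
      (fun ν => W (ν.map F)) (hW.comp (Measure.measurable_map F hF))
    simp only [ϖ, Measure.map_apply hF (hA _)]
    exact this
  refine ⟨ϖ, μ, ⟨hϖm, hϖp, hμm, hμp, hϖd.exists_condExp hXm hϖm hϖp,
    fun i => (hμd i).exists_condExp (hrowm i) (hμm i) (hμp i)⟩, ?_⟩
  rintro ϖ' μ' ⟨hϖm', hϖp', hμm', hμp', ⟨πϖ, hπϖ, hcϖ⟩, hrows⟩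
  have hμe : ∀ i, μ' i =ᵐ[P] μ i := by
    intro i
    obtain ⟨πμ, hπμ, hcμ⟩ := hrows i
    have hd : Directs P (row i) (μ' i) :=
      Directs.of_condExp (hrowm i) (hμm' i) (hμp' i) hπμ hcμ
    exact ae_eq_of_forall_measurableSet (hμp' i) (hμp i) fun A hA =>
      hd.ae_eq_apply (hrowm i) (hμm' i) (hμp' i) (hμm i) (hμp i) (hμd i) hA
  have hXm' : Measurable fun ω i => μ' i ω := measurable_pi_lambda _ hμm'
  have hd' : Directs P (fun ω i => μ' i ω) ϖ' := Directs.of_condExp hXm' hϖm' hϖp' hπϖ hcϖ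
  have hd : Directs P (fun ω i => μ i ω) ϖ' := by
    refine hd'.congr ?_
    filter_upwards [ae_all_iff.2 hμe] with ω hω
    exact funext hω
  refine ⟨?_, hμe⟩
  exact ae_eq_of_forall_measurableSet_measure hϖp' hϖp
    (hd'.ae_isProbabilityMeasure hϖm' fun ω i => hμp' i ω)
    (hϖd.ae_isProbabilityMeasure hϖm fun ω i => hμp i ω)
    fun A hA => hd.ae_eq_apply hXm hϖm' hϖp' hϖm hϖp hϖd hA
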